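/- Let s be an odd positive integer and q = 5^{2s}. Then for all integers t, m with 1 ≤ t < m ≤ 2⌈(q + 4·5^{s} − 25)/12⌉ − 1, there exists an optimal (4, 3)-LRC over F_q with parameters [6m, 4t + 1, 6(m−t)]_q. -/

import Mathlib

/-- The Hamming weight of a vector: the number of nonzero coordinates. -/
def hammingWt {F : Type*} [Zero F] [DecidableEq F] {n : ℕ} (v : Fin n → F) : ℕ :=
  (Finset.univ.filter (fun i => v i ≠ 0)).card

/-- The minimum distance of the linear code `C` is at least `d`. -/
def MinDistGe {F : Type*} [Field F] [DecidableEq F] {n : ℕ}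
    (C : Submodule F (Fin n → F)) (d : ℕ) : Prop :=
  ∀ c ∈ C, c ≠ 0 → d ≤ hammingWt c

/-- The minimum distance of the linear code `C` is exactly `d`. -/
def MinDistEq {F : Type*} [Field F] [DecidableEq F] {n : ℕ}
    (C : Submodule F (Fin n → F)) (d : ℕ) : Prop :=
  MinDistGe C d ∧ ∃ c ∈ C, c ≠ 0 ∧ hammingWt c = d

/-- `C` is an `(r, δ)`-locally repairable code: every coordinate `i` has a repair
group `R` containing `i`, of size at most `r + δ - 1`, such that the punctured code
`C|_R` has minimum distance at least `δ` (i.e. every codeword whose restriction to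
`R` is nonzero has at least `δ` nonzero coordinates inside `R`). -/
def IsLRC {F : Type*} [Field F] [DecidableEq F] {n : ℕ}
    (C : Submodule F (Fin n → F)) (r δ : ℕ) : Prop :=
  ∀ i : Fin n, ∃ R : Finset (Fin n), i ∈ R ∧ R.card ≤ r + δ - 1 ∧
    ∀ c ∈ C, (∃ j ∈ R, c j ≠ 0) → δ ≤ (R.filter (fun j => c j ≠ 0)).card

/-- The parameters `[n, k, d]` attain the Singleton-type bound for `(r, δ)`-LRCs:
`d = n - k + 1 - (⌈k/r⌉ - 1)(δ - 1)`  (here `⌈k/r⌉ = (k + r - 1)/r`). -/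
def SingletonOptimal (n k d r δ : ℕ) : Prop :=
  (d : ℤ) = (n : ℤ) - (k : ℤ) + 1 - ((((k + r - 1) / r : ℕ) : ℤ) - 1) * ((δ : ℤ) - 1)

/-- There exists an optimal `(r, δ)`-LRC over `F` with parameters `[n, k, d]`. -/
def ExistsOptimalLRC (F : Type*) [Field F] [DecidableEq F] (n k d r δ : ℕ) : Prop :=
  ∃ C : Submodule F (Fin n → F),
    Module.finrank F C = k ∧ MinDistEq C d ∧ IsLRC C r δ ∧ SingletonOptimal n k d r δ

/-!
Codewords are the evaluations of functions `∑ i, x ^ i * p i (y)` at points of the curve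
`y ^ 2 = g(x)`, where `g` is a nonsquare polynomial of degree `2 * e`; the `2 * e` points above a
given `y` form a repair group. Collecting even and odd powers of `y` writes such a function as
`A(x) + y * B(x)`, and its zeros are bounded by the degree of the norm `A ^ 2 - g * B ^ 2`, which
vanishes only if `A = B = 0` because `g` is not a square.

The length of the code is governed by the number of `y` with `2 * e` points above them. For
`g = c * (X ^ (Q + 1) - 1)` over an extension of even degree `2 * s` of the field of odd order `Q`,
a Möbius transformation carries almost all points of `x ^ Q - x = a * y ^ 2` to this curve. Elements
of the subfield are squares in the extension, so every term of the character sum counting those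
points is the same quadratic Gauss sum `± Q ^ s`, and the sign is adjusted by the choice of `a`.
-/

open Polynomial Finset

section ZeroBound

variable {F : Type*} [Field F]

theorem sq_sub_mul_sq_ne_zero {g A B : F[X]} (hg : ¬ IsSquare g) (hAB : A ≠ 0 ∨ B ≠ 0) :
    A ^ 2 - g * B ^ 2 ≠ 0 := by
  intro h
  have h : A ^ 2 = g * B ^ 2 := sub_eq_zero.1 h
  have hB : B ≠ 0 := by
    rintro rfl
    simp_all
  obtain ⟨C, rfl⟩ : B ∣ A :=
    (UniqueFactorizationMonoid.pow_dvd_pow_iff_dvd two_ne_zero).1 ⟨g, by rw [h, mul_comm]⟩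
  refine hg ⟨C, mul_right_cancel₀ (pow_ne_zero 2 hB) ?_⟩
  rw [← h]
  ring

theorem card_le_rootMultiplicity_sq_sub_mul_sq {g A B : F[X]} (hN : A ^ 2 - g * B ^ 2 ≠ 0) {x : F}
    {Y : Finset F} (hY : ∀ y ∈ Y, y ^ 2 = g.eval x ∧ A.eval x + B.eval x * y = 0) :
    #Y ≤ (A ^ 2 - g * B ^ 2).rootMultiplicity x := by
  classical
  rcases Y.eq_empty_or_nonempty with rfl | ⟨y₀, hy₀⟩
  · simp
  obtain ⟨hg₀, hAB₀⟩ := hY y₀ hy₀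
  by_cases hB : B.eval x = 0
  · have hA : A.eval x = 0 := by simpa [hB] using hAB₀
    have two_le : 2 ≤ (A ^ 2 - g * B ^ 2).rootMultiplicity x :=
      (le_rootMultiplicity_iff hN).2 <| dvd_sub (pow_dvd_pow_of_dvd (dvd_iff_isRoot.2 hA) 2)
        ((pow_dvd_pow_of_dvd (dvd_iff_isRoot.2 hB) 2).mul_left g)
    have hsub : Y ⊆ {y₀, -y₀} := fun y hy ↦ by
      simpa using sq_eq_sq_iff_eq_or_eq_neg.1 ((hY y hy).1.trans hg₀.symm)
    exact ((card_le_card hsub).trans card_le_two).trans two_le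
  · have hsub : Y ⊆ {y₀} := fun y hy ↦ by
      rw [mem_singleton]
      exact mul_left_cancel₀ hB (add_left_cancel ((hY y hy).2.trans hAB₀.symm))
    refine (card_le_card hsub).trans ((rootMultiplicity_pos hN).2 ?_)
    simp only [IsRoot.def, eval_sub, eval_mul, eval_pow, ← hg₀]
    linear_combination (A.eval x - B.eval x * y₀) * hAB₀

theorem card_le_natDegree_sq_sub_mul_sq {g A B : F[X]} (hN : A ^ 2 - g * B ^ 2 ≠ 0)
    {Z : Finset (F × F)}
    (hZ : ∀ z ∈ Z, z.2 ^ 2 = g.eval z.1 ∧ A.eval z.1 + B.eval z.1 * z.2 = 0) :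
    #Z ≤ (A ^ 2 - g * B ^ 2).natDegree := by
  classical
  have hle : Z.val.map Prod.fst ≤ (A ^ 2 - g * B ^ 2).roots := by
    refine Multiset.le_iff_count.2 fun x ↦ ?_
    rw [count_roots, Multiset.count_map, ← filter_val, card_val,
      ← card_image_of_injOn (f := Prod.snd) fun z hz z' hz' h ↦ Prod.ext (by simp_all) h]
    refine card_le_rootMultiplicity_sq_sub_mul_sq hN fun y hy ↦ ?_
    obtain ⟨z, hz, rfl⟩ := mem_image.1 hy
    obtain ⟨hzZ, rfl⟩ := mem_filter.1 hz
    exact hZ z hzZ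
  simpa using (Multiset.card_le_card hle).trans (card_roots' _)

/-- The polynomial `∑ xⁱ aᵢ(g(x))`, the form taken on `y² = g(x)` by a function of `x` and `y²`. -/
noncomputable def powComp (g : F[X]) {k : ℕ} (a : Fin k → F[X]) : F[X] :=
  ∑ i : Fin k, X ^ (i : ℕ) * (a i).comp g

theorem natDegree_X_pow_mul_comp {a g : F[X]} (hg : 0 < g.natDegree) (ha : a ≠ 0) (i : ℕ) :
    (X ^ i * a.comp g).natDegree = i + g.natDegree * a.natDegree := by
  have hcomp : a.comp g ≠ 0 := by
    rw [Ne, ← leadingCoeff_eq_zero, leadingCoeff_comp hg.ne']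
    exact mul_ne_zero (leadingCoeff_ne_zero.2 ha)
      (pow_ne_zero _ (leadingCoeff_ne_zero.2 (ne_zero_of_natDegree_gt hg)))
  rw [natDegree_X_pow_mul _ hcomp, natDegree_comp, add_comm, mul_comm]

theorem natDegree_powComp_le {g : F[X]} {k d : ℕ} {a : Fin k → F[X]}
    (ha : ∀ i n, (a i).coeff n ≠ 0 → i + g.natDegree * n ≤ d) : (powComp g a).natDegree ≤ d := by
  refine natDegree_sum_le_of_forall_le _ _ fun i _ ↦ ?_
  by_cases hi : a i = 0
  · simp [hi]
  · calc (X ^ (i : ℕ) * (a i).comp g).natDegree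
        ≤ i + (a i).natDegree * g.natDegree :=
          natDegree_mul_le_of_le (natDegree_X_pow_le _) natDegree_comp_le
      _ ≤ d := mul_comm (a i).natDegree _ ▸ ha i _ (leadingCoeff_ne_zero.2 hi)

theorem eq_zero_of_powComp_eq_zero {g : F[X]} {k : ℕ} (hk : k ≤ g.natDegree) {a : Fin k → F[X]}
    (h : powComp g a = 0) (i : Fin k) : a i = 0 := by
  have hg : 0 < g.natDegree := i.pos.trans_le hk
  have term_eq_zero (j : Fin k) : X ^ (j : ℕ) * (a j).comp g = 0 ↔ a j = 0 := by
    rw [mul_eq_zero_iff_left (pow_ne_zero _ X_ne_zero), comp_eq_zero_iff]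
    refine or_iff_left fun h ↦ hg.ne' ?_
    rw [h.2, natDegree_C]
  have distinct : Set.Pairwise {j : Fin k | j ∈ univ ∧ X ^ (j : ℕ) * (a j).comp g ≠ 0}
      (Function.onFun (· ≠ ·) (degree ∘ fun j : Fin k ↦ X ^ (j : ℕ) * (a j).comp g)) := by
    rintro j ⟨-, hj⟩ l ⟨-, hl⟩ hjl hdeg
    have hdeg := natDegree_eq_of_degree_eq hdeg
    rw [natDegree_X_pow_mul_comp hg (mt (term_eq_zero j).2 hj),
      natDegree_X_pow_mul_comp hg (mt (term_eq_zero l).2 hl)] at hdeg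
    have hmod := congrArg (· % g.natDegree) hdeg
    simp only [Nat.add_mul_mod_self_left, Nat.mod_eq_of_lt (j.2.trans_le hk),
      Nat.mod_eq_of_lt (l.2.trans_le hk)] at hmod
    exact hjl (Fin.ext hmod)
  have hsup := degree_sum_eq_of_disjoint _ _ distinct
  rw [← powComp, h, degree_zero, eq_comm, Finset.sup_eq_bot_iff] at hsup
  exact (term_eq_zero i).1 (degree_eq_bot.1 (hsup i (mem_univ i)))

theorem eval_powComp (g : F[X]) {k : ℕ} (a : Fin k → F[X]) (x : F) :
    (powComp g a).eval x = ∑ i : Fin k, x ^ (i : ℕ) * (a i).eval (g.eval x) := by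
  simp [powComp, eval_finsetSum, eval_comp]

theorem eq_expand_contract_add (p : F[X]) :
    p = expand F 2 (contract 2 p) + X * expand F 2 (contract 2 (divX p)) := by
  ext n
  rcases n with _ | n
  · simp [coeff_expand, coeff_contract]
  rw [coeff_add, coeff_X_mul, coeff_expand two_pos, coeff_expand two_pos]
  rcases n.even_or_odd with hn | hn
  · rw [if_neg (by grind), if_pos hn.two_dvd, coeff_contract two_ne_zero, coeff_divX,
      Nat.div_mul_cancel hn.two_dvd, zero_add]
  · rw [if_pos hn.add_one.two_dvd, if_neg (by grind), coeff_contract two_ne_zero,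
      Nat.div_mul_cancel hn.add_one.two_dvd, add_zero]

/-- The value at `z = (x, y)` of the bivariate polynomial `∑ xⁱ pᵢ(y)`, represented by the family of
its coefficients in `x`; codewords are built from these values. -/
noncomputable def evalPair {k : ℕ} (p : Fin k → F[X]) (z : F × F) : F :=
  ∑ i : Fin k, z.1 ^ (i : ℕ) * (p i).eval z.2

theorem evalPair_eq_eval_powComp {g : F[X]} {k : ℕ} (p : Fin k → F[X]) {z : F × F}
    (hz : z.2 ^ 2 = g.eval z.1) :
    evalPair p z = (powComp g fun i ↦ contract 2 (p i)).eval z.1 +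
      (powComp g fun i ↦ contract 2 (divX (p i))).eval z.1 * z.2 := by
  rw [eval_powComp, eval_powComp, sum_mul, ← sum_add_distrib]
  refine sum_congr rfl fun i _ ↦ ?_
  conv_lhs => rw [eq_expand_contract_add (p i)]
  rw [eval_add, eval_mul, eval_X, expand_eval, expand_eval, hz]
  ring

theorem card_le_of_evalPair_eq_zero {g : F[X]} {e t : ℕ} (hg : ¬ IsSquare g)
    (hdeg : g.natDegree = 2 * e) (he : 0 < e) (ht : 1 ≤ t) {p : Fin (e + 1) → F[X]} (hp : p ≠ 0)
    (hweight : ∀ i n, (p i).coeff n ≠ 0 → i + e * n ≤ e * t) {Z : Finset (F × F)}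
    (hZ : ∀ z ∈ Z, z.2 ^ 2 = g.eval z.1 ∧ evalPair p z = 0) : #Z ≤ 2 * e * t := by
  set A := powComp g fun i ↦ contract 2 (p i)
  set B := powComp g fun i ↦ contract 2 (divX (p i))
  have hAB : A ≠ 0 ∨ B ≠ 0 := by
    by_contra! h
    refine hp (funext fun i ↦ ?_)
    rw [eq_expand_contract_add (p i), eq_zero_of_powComp_eq_zero (by lia) h.1 i,
      eq_zero_of_powComp_eq_zero (by lia) h.2 i]
    simp
  have hA : A.natDegree ≤ e * t := natDegree_powComp_le fun i n hn ↦ by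
    rw [coeff_contract two_ne_zero] at hn
    calc i + g.natDegree * n = i + e * (n * 2) := by rw [hdeg]; ring
      _ ≤ e * t := hweight i _ hn
  have hB : B.natDegree ≤ e * t - e := natDegree_powComp_le fun i n hn ↦ by
    rw [coeff_contract two_ne_zero, coeff_divX] at hn
    have := hweight i _ hn
    rw [hdeg, Nat.le_sub_iff_add_le (Nat.le_mul_of_pos_right e ht)]
    linarith
  have h_le : e ≤ e * t := Nat.le_mul_of_pos_right e ht
  calc #Z ≤ (A ^ 2 - g * B ^ 2).natDegree :=
        card_le_natDegree_sq_sub_mul_sq (sq_sub_mul_sq_ne_zero hg hAB) fun z hz ↦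
          ⟨(hZ z hz).1, (evalPair_eq_eval_powComp p (hZ z hz).1).symm.trans (hZ z hz).2⟩
    _ ≤ max (2 * A.natDegree) (g.natDegree + 2 * B.natDegree) :=
        natDegree_sub_le_of_le natDegree_pow_le
          (natDegree_mul_le_of_le le_rfl natDegree_pow_le)
    _ ≤ 2 * e * t := by rw [mul_assoc]; lia

end ZeroBound

section Code

variable {F : Type*} [Field F]

theorem hammingWt_add_card_eq_zero [DecidableEq F] {n : ℕ} (v : Fin n → F) :
    hammingWt v + #{j | v j = 0} = n := by
  rw [hammingWt, add_comm, card_filter_add_card_filter_not, card_univ, Fintype.card_fin]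

/-- The message space of the code: families `(pᵢ)` with `deg p₀ ≤ t` and `deg pᵢ < t` for
`1 ≤ i ≤ e`. -/
abbrev Message (F : Type*) [Field F] (e t : ℕ) : Type _ :=
  (i : Fin (e + 1)) → degreeLT F (t + if i = 0 then 1 else 0)

/-- The encoder, evaluating `∑ xⁱ pᵢ(y)` at the points `pt j`. -/
noncomputable def evalMap {e t n : ℕ} (pt : Fin n → F × F) : Message F e t →ₗ[F] Fin n → F where
  toFun p j := evalPair (fun i ↦ (p i : F[X])) (pt j)
  map_add' p q := by
    ext j
    simp [evalPair, mul_add, sum_add_distrib]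
  map_smul' a p := by
    ext j
    simp [evalPair, mul_sum, mul_left_comm]

theorem evalMap_apply {e t n : ℕ} (pt : Fin n → F × F) (p : Message F e t) (j : Fin n) :
    evalMap pt p j = evalPair (fun i ↦ (p i : F[X])) (pt j) :=
  rfl

theorem finrank_message (e t : ℕ) : Module.finrank F (Message F e t) = (e + 1) * t + 1 := by
  have finrank_degreeLT (d : ℕ) : Module.finrank F (degreeLT F d) = d := by
    simp [(degreeLTEquiv F d).finrank_eq]
  simp only [Module.finrank_pi_fintype, finrank_degreeLT, sum_add_distrib]
  simp

theorem Message.add_mul_le_of_coeff_ne_zero {e t : ℕ} (p : Message F e t) (i : Fin (e + 1))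
    {n : ℕ} (hn : (p i : F[X]).coeff n ≠ 0) : i + e * n ≤ e * t := by
  have hlt : n < t + if i = 0 then 1 else 0 := by
    by_contra! h
    exact hn (coeff_eq_zero_of_degree_lt ((mem_degreeLT.1 (p i).2).trans_le (by exact_mod_cast h)))
  split_ifs at hlt with hi
  · rw [hi, Fin.val_zero, zero_add]
    exact Nat.mul_le_mul_left e (Nat.lt_succ_iff.1 hlt)
  · have := Nat.mul_le_mul_left e (Nat.succ_le_of_lt hlt)
    rw [Nat.mul_succ] at this
    lia

/-- The message whose codeword vanishes exactly at the points with second coordinate in `T`; it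
attains the minimum distance. -/
noncomputable def prodMessage (e : ℕ) (T : Finset F) : Message F e #T :=
  fun i ↦ ⟨if i = 0 then ∏ b ∈ T, (X - C b) else 0, by
    rw [mem_degreeLT]
    split_ifs
    · simpa only [degree_prod, degree_X_sub_C, sum_const, nsmul_one] using
        Nat.cast_lt.2 (Nat.lt_succ_self #T)
    · exact WithBot.bot_lt_coe _⟩

theorem evalMap_prodMessage {e n : ℕ} (pt : Fin n → F × F) (T : Finset F) (j : Fin n) :
    evalMap pt (prodMessage e T) j = ∏ b ∈ T, ((pt j).2 - b) := by
  rw [evalMap_apply, evalPair, Fin.sum_univ_succ]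
  simp [prodMessage, eval_prod, Fin.succ_ne_zero]

section MinimumDistance

variable [DecidableEq F] {g : F[X]} {e t n : ℕ} {pt : Fin n → F × F}

theorem card_evalMap_eq_zero_le (hg : ¬ IsSquare g) (hdeg : g.natDegree = 2 * e) (he : 0 < e)
    (ht : 1 ≤ t) (hpt : Function.Injective pt) (hcurve : ∀ j, (pt j).2 ^ 2 = g.eval (pt j).1)
    {p : Message F e t} (hp : p ≠ 0) : #{j | evalMap pt p j = 0} ≤ 2 * e * t := by
  rw [← card_image_of_injective _ hpt]
  refine card_le_of_evalPair_eq_zero (p := fun i ↦ (p i : F[X])) hg hdeg he ht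
    (fun h ↦ hp (funext fun i ↦ Subtype.ext (congrFun h i)))
    (fun i n ↦ p.add_mul_le_of_coeff_ne_zero i) ?_
  simp only [mem_image, mem_filter_univ, forall_exists_index, and_imp, forall_apply_eq_imp_iff₂]
  exact fun j hj ↦ ⟨hcurve j, hj⟩

theorem evalMap_injective (hn : 2 * e * t < n)
    (hzero : ∀ p : Message F e t, p ≠ 0 → #{j | evalMap pt p j = 0} ≤ 2 * e * t) :
    Function.Injective (evalMap pt : Message F e t →ₗ[F] Fin n → F) := by
  refine (injective_iff_map_eq_zero _).2 fun p hp ↦ by_contra fun hp₀ ↦ hn.not_ge ?_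
  simpa [hp] using hzero p hp₀

theorem card_evalMap_prodMessage_eq_zero {T : Finset F} {d : ℕ}
    (hfib : ∀ y ∈ T, #{j | (pt j).2 = y} = d) :
    #{j | evalMap pt (prodMessage e T) j = 0} = #T * d := by
  have h_iff (j : Fin n) : evalMap pt (prodMessage e T) j = 0 ↔ (pt j).2 ∈ T := by
    simp [evalMap_prodMessage, prod_eq_zero_iff, sub_eq_zero]
  simp only [h_iff]
  rw [card_eq_sum_card_fiberwise (f := fun j ↦ (pt j).2) (t := T) (by simp [Set.MapsTo])]
  refine sum_const_nat fun y hy ↦ ?_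
  rw [← hfib y hy, filter_filter]
  congr! 2 with j
  grind

end MinimumDistance

theorem card_fiber_le_of_evalPair_eq_zero {e : ℕ} {p : Fin (e + 1) → F[X]} {x₀ y : F} {Z : Finset F}
    (hx₀ : evalPair p (x₀, y) ≠ 0) (hZ : ∀ x ∈ Z, evalPair p (x, y) = 0) : #Z ≤ e := by
  set f : F[X] := ∑ i : Fin (e + 1), C ((p i).eval y) * X ^ (i : ℕ)
  have eval_f (x : F) : f.eval x = evalPair p (x, y) := by
    simp only [f, evalPair, eval_finsetSum, eval_mul, eval_C, eval_pow, eval_X, mul_comm]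
  have hf : f ≠ 0 := fun h ↦ hx₀ (by rw [← eval_f, h, eval_zero])
  have hdeg : f.natDegree ≤ e := natDegree_sum_le_of_forall_le _ _ fun i _ ↦
    (natDegree_C_mul_X_pow_le _ _).trans (Nat.lt_succ_iff.1 i.2)
  refine (card_le_degree_of_subset_roots fun x hx ↦ ?_).trans hdeg
  rw [mem_roots hf, IsRoot.def, eval_f, hZ x hx]

theorem isLRC_range_evalMap [DecidableEq F] {e t n : ℕ} {pt : Fin n → F × F}
    (hpt : Function.Injective pt) (hfib : ∀ j, #{l | (pt l).2 = (pt j).2} = 2 * e) :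
    IsLRC (LinearMap.range (evalMap pt : Message F e t →ₗ[F] Fin n → F)) (e + 1) e := by
  intro j
  refine ⟨({l | (pt l).2 = (pt j).2} : Finset (Fin n)), by simp, by rw [hfib]; lia, ?_⟩
  rintro _ ⟨p, rfl⟩ ⟨l₀, hl₀, hne⟩
  have pt_eq {l : Fin n} (hl : (pt l).2 = (pt j).2) : pt l = ((pt l).1, (pt j).2) :=
    Prod.ext rfl hl
  rw [mem_filter_univ] at hl₀
  rw [evalMap_apply, pt_eq hl₀] at hne
  have hzero : #{l ∈ {l | (pt l).2 = (pt j).2} | evalMap pt p l = 0} ≤ e := by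
    rw [← card_image_of_injOn (f := fun l ↦ (pt l).1)]
    · refine card_fiber_le_of_evalPair_eq_zero hne ?_
      simp only [mem_image, mem_filter, mem_univ, true_and]
      rintro _ ⟨l, ⟨hl, hl₀⟩, rfl⟩
      rwa [evalMap_apply, pt_eq hl] at hl₀
    · intro l hl l' hl' h
      simp only [mem_filter, mem_univ, true_and, coe_filter, Set.mem_ofPred_eq] at hl hl'
      exact hpt (Prod.ext h (hl.1.trans hl'.1.symm))
  have := card_filter_add_card_filter_not (s := {l | (pt l).2 = (pt j).2})
    (fun l ↦ evalMap pt p l = 0)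
  rw [hfib] at this
  lia

theorem singletonOptimal_mul {e t m : ℕ} (htm : t ≤ m) :
    SingletonOptimal (2 * e * m) ((e + 1) * t + 1) (2 * e * (m - t)) (e + 1) e := by
  have hceil : ((e + 1) * t + 1 + (e + 1) - 1) / (e + 1) = t + 1 := by
    rw [show (e + 1) * t + 1 + (e + 1) - 1 = (e + 1) * (t + 1) by ring_nf; lia]
    exact Nat.mul_div_cancel_left _ e.succ_pos
  rw [SingletonOptimal, hceil]
  push_cast [htm]
  ring

theorem existsOptimalLRC_of_points [DecidableEq F] {g : F[X]} {e t : ℕ} (hg : ¬ IsSquare g)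
    (hdeg : g.natDegree = 2 * e) (he : 0 < e) {S : Finset F} (ht : 1 ≤ t) (htS : t < #S)
    {pt : Fin (2 * e * #S) → F × F} (hpt : Function.Injective pt)
    (hcurve : ∀ j, (pt j).2 ^ 2 = g.eval (pt j).1) (hS : ∀ j, (pt j).2 ∈ S)
    (hfib : ∀ y ∈ S, #{j | (pt j).2 = y} = 2 * e) :
    ExistsOptimalLRC F (2 * e * #S) ((e + 1) * t + 1) (2 * e * (#S - t)) (e + 1) e := by
  have hzero (p : Message F e t) (hp : p ≠ 0) : #{j | evalMap pt p j = 0} ≤ 2 * e * t :=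
    card_evalMap_eq_zero_le hg hdeg he ht hpt hcurve hp
  have hn : 2 * e * t < 2 * e * #S := by gcongr
  have hinj : Function.Injective (evalMap pt : Message F e t →ₗ[F] _) :=
    evalMap_injective hn hzero
  refine ⟨LinearMap.range (evalMap pt : Message F e t →ₗ[F] _), ?_, ⟨?_, ?_⟩,
    isLRC_range_evalMap hpt fun j ↦ hfib _ (hS j), singletonOptimal_mul htS.le⟩
  · rw [LinearMap.finrank_range_of_inj hinj, finrank_message]
  · rintro _ ⟨p, rfl⟩ hp
    have hp := hzero p fun h ↦ hp (by rw [h, map_zero])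
    have := hammingWt_add_card_eq_zero (evalMap pt p)
    rw [Nat.mul_sub]
    lia
  · obtain ⟨T, hTS, rfl⟩ := exists_subset_card_eq htS.le
    have hT : #{j | evalMap pt (prodMessage e T) j = 0} = #T * (2 * e) :=
      card_evalMap_prodMessage_eq_zero fun y hy ↦ hfib y (hTS hy)
    have hweight : hammingWt (evalMap pt (prodMessage e T)) = 2 * e * (#S - #T) := by
      have := hammingWt_add_card_eq_zero (evalMap pt (prodMessage e T))
      rw [Nat.mul_sub, mul_comm _ #T]
      lia
    refine ⟨_, ⟨prodMessage e T, rfl⟩, fun h ↦ ?_, hweight⟩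
    have hpos : 0 < 2 * e * (#S - #T) := Nat.mul_pos (by lia) (Nat.sub_pos_of_lt htS)
    rw [← hweight, h] at hpos
    simp [hammingWt] at hpos

theorem existsOptimalLRC_of_card_fibers [Fintype F] [DecidableEq F] {g : F[X]} {e t : ℕ}
    (hg : ¬ IsSquare g) (hdeg : g.natDegree = 2 * e) (he : 0 < e) {S : Finset F}
    (hS : ∀ y ∈ S, #{x | g.eval x = y ^ 2} = 2 * e) (ht : 1 ≤ t) (htS : t < #S) :
    ExistsOptimalLRC F (2 * e * #S) ((e + 1) * t + 1) (2 * e * (#S - t)) (e + 1) e := by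
  set P : Finset (F × F) := {z | g.eval z.1 = z.2 ^ 2 ∧ z.2 ∈ S}
  have card_fiber (y : F) (hy : y ∈ S) : #{z ∈ P | z.2 = y} = 2 * e := by
    rw [← hS y hy]
    refine card_nbij' Prod.fst (·, y) ?_ ?_ ?_ ?_ <;>
      simp +contextual [P, Set.MapsTo, Set.LeftInvOn, hy]
  have card_P : #P = 2 * e * #S := by
    rw [card_eq_sum_card_fiberwise (f := Prod.snd) (t := S) (fun z hz ↦ (mem_filter.1 hz).2.2),
      sum_const_nat card_fiber, mul_comm]
  let pt : Fin (2 * e * #S) ↪ F × F :=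
    (P.equivFinOfCardEq card_P).symm.toEmbedding.trans (.subtype (· ∈ P))
  have mem_P (j) : pt j ∈ P := ((P.equivFinOfCardEq card_P).symm j).2
  have map_pt : univ.map pt = P := by
    refine eq_of_subset_of_card_le (fun z hz ↦ ?_) (by simp [card_P])
    obtain ⟨j, -, rfl⟩ := mem_map.1 hz
    exact mem_P j
  refine existsOptimalLRC_of_points hg hdeg he ht htS pt.injective
    (fun j ↦ (mem_filter.1 (mem_P j)).2.1.symm) (fun j ↦ (mem_filter.1 (mem_P j)).2.2)
    fun y hy ↦ ?_
  calc #{j | (pt j).2 = y} = #{z ∈ univ.map pt | z.2 = y} := by rw [filter_map, card_map]; rfl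
    _ = 2 * e := by rw [map_pt, card_fiber y hy]

end Code

section PointCount

theorem sum_addChar_mul_sq {F : Type*} [Field F] [Fintype F] [DecidableEq F]
    (hF : ringChar F ≠ 2) {ψ : AddChar F ℂ} (hψ : ψ.IsPrimitive) {b : F} (hb : b ≠ 0) :
    ∑ v, ψ (b * v ^ 2) =
      quadraticChar F b * gaussSum ((quadraticChar F).ringHomComp (Int.castRingHom ℂ)) ψ := by
  have card_sqrts (u : F) : (#{v | v ^ 2 = u} : ℂ) = quadraticChar F u + 1 := by
    exact_mod_cast congrArg (Int.cast : ℤ → ℂ) (by simpa using quadraticChar_card_sqrts hF u)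
  calc ∑ v, ψ (b * v ^ 2) = ∑ u, ∑ v with v ^ 2 = u, ψ (b * u) := by
        exact (sum_fiberwise' univ (· ^ 2) fun u ↦ ψ (b * u)).symm
    _ = ∑ u, quadraticChar F u * ψ (b * u) + ∑ u, ψ (u * b) := by
        simp only [sum_const, nsmul_eq_mul, card_sqrts, add_mul, one_mul, sum_add_distrib,
          mul_comm b]
    _ = gaussSum ((quadraticChar F).ringHomComp (Int.castRingHom ℂ)) (ψ.mulShift b) := by
        rw [AddChar.sum_mulShift _ hψ, if_neg hb]
        simp [gaussSum]
    _ = _ := by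
        rw [← Units.val_mk0 hb, gaussSum_mulShift_eq, ((quadraticChar_isQuadratic F).comp _).inv]
        simp

variable {K F : Type*} [Field K] [Fintype K] [Field F]

theorem pow_card_eq_self_iff_mem_range [Algebra K F] {b : F} :
    b ^ Fintype.card K = b ↔ b ∈ Set.range (algebraMap K F) := by
  have hsplit : Splits (X ^ Fintype.card K - X : K[X]) := splits_iff_card_roots.2 <| by
    rw [FiniteField.roots_X_pow_card_sub_X, ← card_def, card_univ,
      FiniteField.X_pow_card_sub_X_natDegree_eq K Fintype.one_lt_card]
  have mem_map := FiniteField.roots_X_pow_card_sub_X K ▸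
    hsplit.roots_map (algebraMap K F) ▸ Multiset.mem_map (b := b)
  simpa [sub_eq_zero, FiniteField.X_pow_card_sub_X_ne_zero F Fintype.one_lt_card] using mem_map

theorem exists_isPrimitive_addChar_pow_card_eq (K F : Type*) [Field K] [Fintype K] [Field F]
    [Finite F] [Algebra K F] :
    ∃ ψ : AddChar F ℂ, ψ.IsPrimitive ∧ ∀ z, ψ (z ^ Fintype.card K) = ψ z := by
  obtain ⟨ψ₀, hψ₀⟩ := AddChar.exists_apply_ne_zero.2 (one_ne_zero (α := K))
  refine ⟨ψ₀.compAddMonoidHom (Algebra.trace K F).toAddMonoidHom, .of_ne_one ?_, fun z ↦ ?_⟩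
  · obtain ⟨z, hz⟩ := Algebra.trace_surjective K F 1
    exact AddChar.ne_one_iff.2 ⟨z, by simpa [hz] using hψ₀⟩
  · exact congrArg ψ₀ <|
      Algebra.trace_eq_of_algEquiv (FiniteField.frobeniusAlgEquivOfAlgebraic K F) z

variable [Fintype F] [DecidableEq F] [Algebra K F]

theorem sum_addChar_mul_pow_card_sub {ψ : AddChar F ℂ} (hψ : ψ.IsPrimitive)
    (hinv : ∀ z, ψ (z ^ Fintype.card K) = ψ z) (b : F) :
    ∑ x, ψ (b * (x ^ Fintype.card K - x)) =
      if b ^ Fintype.card K = b then (Fintype.card F : ℂ) else 0 := by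
  have frobenius_sub (x : F) : ψ (b * (x ^ Fintype.card K - x)) =
      ψ (x ^ Fintype.card K * (b - b ^ Fintype.card K)) := by
    rw [mul_sub, AddChar.map_sub_eq_div, ← hinv (b * x), ← AddChar.map_sub_eq_div]
    ring_nf
  calc ∑ x, ψ (b * (x ^ Fintype.card K - x))
      = ∑ x, ψ (x * (b - b ^ Fintype.card K)) := by
        simp only [frobenius_sub]
        exact (FiniteField.frobeniusAlgEquivOfAlgebraic K F).toEquiv.sum_comp
          fun x ↦ ψ (x * (b - b ^ Fintype.card K))
    _ = _ := by
        rw [AddChar.sum_mulShift _ hψ, Nat.cast_ite, Nat.cast_zero]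
        simp only [sub_eq_zero, eq_comm]

theorem card_pow_card_sub_eq {ψ : AddChar F ℂ} (hψ : ψ.IsPrimitive)
    (hinv : ∀ z, ψ (z ^ Fintype.card K) = ψ z) (u : F) :
    (#{x | x ^ Fintype.card K - x = u} : ℂ) = ∑ l : K, ψ (algebraMap K F l * u) := by
  have hq : (Fintype.card F : ℂ) ≠ 0 := Nat.cast_ne_zero.2 Fintype.card_ne_zero
  refine mul_left_cancel₀ hq ?_
  calc (Fintype.card F : ℂ) * #{x | x ^ Fintype.card K - x = u}
      = ∑ x, ∑ b, ψ (b * (x ^ Fintype.card K - x - u)) := by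
        simp [AddChar.sum_mulShift _ hψ, sub_eq_zero, sum_ite, mul_comm]
    _ = ∑ b, ψ (-b * u) * ∑ x, ψ (b * (x ^ Fintype.card K - x)) := by
        rw [sum_comm]
        refine sum_congr rfl fun b _ ↦ ?_
        rw [mul_sum]
        refine sum_congr rfl fun x _ ↦ ?_
        rw [← AddChar.map_add_eq_mul]
        ring_nf
    _ = Fintype.card F * ∑ b with b ^ Fintype.card K = b, ψ (-b * u) := by
        simp only [sum_addChar_mul_pow_card_sub hψ hinv, mul_ite, mul_zero, ← sum_filter,
          mul_comm _ (Fintype.card F : ℂ), mul_sum]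
    _ = Fintype.card F * ∑ l : K, ψ (algebraMap K F l * u) := by
        congr 1
        symm
        refine sum_nbij (fun l ↦ algebraMap K F (-l)) (fun l _ ↦ ?_)
          ((algebraMap K F).injective.comp neg_injective).injOn (fun b hb ↦ ?_) (by simp)
        · simp only [mem_filter_univ, pow_card_eq_self_iff_mem_range, Set.mem_range_self]
        · obtain ⟨l, rfl⟩ := pow_card_eq_self_iff_mem_range.1 (mem_filter.1 hb).2
          exact ⟨-l, by simp⟩

theorem quadraticChar_algebraMap (hchar : ringChar F ≠ 2) {s : ℕ}
    (hF : Fintype.card F = Fintype.card K ^ (2 * s)) {l : K} (hl : l ≠ 0) :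
    quadraticChar F (algebraMap K F l) = 1 := by
  have hl' : algebraMap K F l ≠ 0 := (_root_.map_ne_zero _).2 hl
  obtain ⟨w, hw⟩ : Odd (Fintype.card K ^ s) := by
    have hodd := Nat.odd_iff.2 (FiniteField.odd_card_of_char_ne_two hchar)
    rw [hF, mul_comm, pow_mul] at hodd
    exact Nat.Odd.of_mul_left (pow_two (Fintype.card K ^ s) ▸ hodd)
  have hhalf : Fintype.card F / 2 = (Fintype.card K ^ s - 1) * (w + 1) := by
    rw [hF, mul_comm 2, pow_mul, hw]
    grind
  obtain ⟨c, hc⟩ := Nat.sub_one_dvd_pow_sub_one (Fintype.card K) s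
  rw [quadraticChar_one_iff_isSquare hl', FiniteField.isSquare_iff hchar hl', hhalf, hc, ← map_pow,
    mul_assoc, pow_mul, FiniteField.pow_card_sub_one_eq_one l hl, one_pow, map_one]

theorem card_pow_card_sub_eq_mul_sq (hchar : ringChar F ≠ 2) {s : ℕ}
    (hF : Fintype.card F = Fintype.card K ^ (2 * s)) {ψ : AddChar F ℂ} (hψ : ψ.IsPrimitive)
    (hinv : ∀ z, ψ (z ^ Fintype.card K) = ψ z) {a : F} (ha : a ≠ 0) :
    (#{z : F × F | z.1 ^ Fintype.card K - z.1 = a * z.2 ^ 2} : ℂ) =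
      Fintype.card F + (Fintype.card K - 1) * (quadraticChar F a *
        gaussSum ((quadraticChar F).ringHomComp (Int.castRingHom ℂ)) ψ) := by
  classical
  have sum_term (l : K) (hl : l ≠ 0) : ∑ v, ψ (algebraMap K F l * (a * v ^ 2)) =
      quadraticChar F a * gaussSum ((quadraticChar F).ringHomComp (Int.castRingHom ℂ)) ψ := by
    simp only [← mul_assoc]
    rw [sum_addChar_mul_sq hchar hψ (mul_ne_zero ((_root_.map_ne_zero _).2 hl) ha), map_mul,
      quadraticChar_algebraMap hchar hF hl, one_mul]
  calc (#{z : F × F | z.1 ^ Fintype.card K - z.1 = a * z.2 ^ 2} : ℂ)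
      = ∑ v, (#{x | x ^ Fintype.card K - x = a * v ^ 2} : ℂ) := by
        simp only [card_filter, Fintype.sum_prod_type_right]
        push_cast
        rfl
    _ = ∑ l : K, ∑ v, ψ (algebraMap K F l * (a * v ^ 2)) := by
        simp only [card_pow_card_sub_eq hψ hinv]
        exact sum_comm
    _ = _ := by
        rw [← add_sum_erase _ _ (mem_univ 0),
          sum_congr rfl fun l hl ↦ sum_term l (ne_of_mem_erase hl)]
        simp [card_erase_of_mem, Nat.cast_sub Fintype.card_pos]

theorem exists_card_pow_card_sub_eq_mul_sq (hchar : ringChar F ≠ 2) {s : ℕ}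
    (hF : Fintype.card F = Fintype.card K ^ (2 * s)) :
    ∃ a : F, a ≠ 0 ∧ #{z : F × F | z.1 ^ Fintype.card K - z.1 = a * z.2 ^ 2} =
      Fintype.card F + (Fintype.card K - 1) * Fintype.card K ^ s := by
  obtain ⟨ψ, hψ, hinv⟩ := exists_isPrimitive_addChar_pow_card_eq K F
  set G := gaussSum ((quadraticChar F).ringHomComp (Int.castRingHom ℂ)) ψ with hG
  have hGsq : G ^ 2 = ((Fintype.card K : ℂ) ^ s) ^ 2 := by
    have h_neg_one : quadraticChar F (-1) = 1 := by
      simpa using quadraticChar_algebraMap (F := F) hchar hF (neg_ne_zero.2 (one_ne_zero (α := K)))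
    have hne : (quadraticChar F).ringHomComp (Int.castRingHom ℂ) ≠ 1 :=
      (MulChar.ringHomComp_ne_one_iff Int.cast_injective).2 (quadraticChar_ne_one hchar)
    rw [hG, gaussSum_sq hne ((quadraticChar_isQuadratic F).comp _) hψ]
    simp [h_neg_one, hF, ← pow_mul, mul_comm]
  obtain ⟨a, ha, hGa⟩ : ∃ a : F, a ≠ 0 ∧ quadraticChar F a * G = (Fintype.card K : ℂ) ^ s := by
    rcases sq_eq_sq_iff_eq_or_eq_neg.1 hGsq with h | h
    · exact ⟨1, one_ne_zero, by simp [h]⟩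
    · obtain ⟨a, ha⟩ := quadraticChar_exists_neg_one' hchar
      exact ⟨a, a.ne_zero, by simp [ha, h]⟩
  refine ⟨a, ha, Nat.cast_injective (R := ℂ) ?_⟩
  rw [card_pow_card_sub_eq_mul_sq hchar hF hψ hinv ha, hGa]
  simp [Nat.cast_sub Fintype.card_pos]

end PointCount

section PrimitiveRoots

variable {F : Type*} [Field F] [Fintype F] {n Q s : ℕ}

theorem exists_isPrimitiveRoot_of_dvd (hn : n ∣ Fintype.card F - 1) :
    ∃ ζ : F, IsPrimitiveRoot ζ n := by
  obtain ⟨u, hu⟩ := IsCyclic.exists_ofOrder_eq_natCard (α := Fˣ)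
  obtain ⟨k, hk⟩ := hn
  have hcard : Nat.card Fˣ = k * n := by
    rw [Nat.card_units, Nat.card_eq_fintype_card, hk, mul_comm]
  refine ⟨u ^ k, ?_⟩
  have hζ : IsPrimitiveRoot (u : F) (Nat.card Fˣ) := by
    rw [IsPrimitiveRoot.coe_units_iff, ← hu]
    exact IsPrimitiveRoot.orderOf u
  exact hζ.pow Nat.card_pos hcard

theorem exists_isPrimitiveRoot_add_one (hF : Fintype.card F = Q ^ (2 * s)) :
    ∃ ζ : F, IsPrimitiveRoot ζ (Q + 1) := by
  have hdvd : Q + 1 ∣ Q ^ 2 - 1 := ⟨Q - 1, Nat.sq_sub_sq Q 1⟩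
  rw [pow_mul] at hF
  exact exists_isPrimitiveRoot_of_dvd
    (hdvd.trans (hF ▸ Nat.sub_one_dvd_pow_sub_one (Q ^ 2) s))

theorem exists_pow_pow_eq_self_and_pow_ne_self (hQ : 1 < Q) (hF : Fintype.card F = Q ^ (2 * s)) :
    ∃ θ : F, (θ ^ Q) ^ Q = θ ∧ θ ^ Q ≠ θ := by
  rw [pow_mul] at hF
  obtain ⟨θ, hθ⟩ : ∃ θ : F, IsPrimitiveRoot θ (Q ^ 2 - 1) :=
    exists_isPrimitiveRoot_of_dvd (hF ▸ Nat.sub_one_dvd_pow_sub_one (Q ^ 2) s)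
  have hQsq : Q < Q ^ 2 := lt_self_pow₀ hQ one_lt_two
  refine ⟨θ, ?_, fun h ↦ ?_⟩
  · rw [← pow_mul, ← pow_two, ← Nat.sub_add_cancel (hQ.trans hQsq).le, pow_succ,
      hθ.pow_eq_one, one_mul]
  · refine hθ.pow_ne_one_of_pos_of_lt (l := Q - 1) (by lia) (by lia) ?_
    refine mul_right_cancel₀ (hθ.ne_zero (by lia)) ?_
    rw [← pow_succ, Nat.sub_add_cancel hQ.le, h, one_mul]

end PrimitiveRoots

section ExcludedPoints

variable {F : Type*} [Field F] [Fintype F] [DecidableEq F] {a : F}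

theorem card_mul_sq_eq_le_two (ha : a ≠ 0) (u : F) : #{v | u = a * v ^ 2} ≤ 2 := by
  rcases ({v | u = a * v ^ 2} : Finset F).eq_empty_or_nonempty with h | ⟨w, hw⟩
  · simp [h]
  · have hsub : ({v | u = a * v ^ 2} : Finset F) ⊆ {w, -w} := fun v hv ↦ by
      rw [mem_filter_univ] at hv hw
      simpa using sq_eq_sq_iff_eq_or_eq_neg.1 (mul_left_cancel₀ ha (hv.symm.trans hw))
    exact (card_le_card hsub).trans card_le_two

theorem card_eq_mul_sq_and_fst_eq_le_two (ha : a ≠ 0) (f : F → F) (θ : F) :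
    #{z : F × F | f z.1 = a * z.2 ^ 2 ∧ z.1 = θ} ≤ 2 := by
  refine le_trans ?_ (card_mul_sq_eq_le_two ha (f θ))
  refine card_le_card_of_injOn Prod.snd ?_ ?_
  · rintro ⟨x, v⟩ hz
    simp only [coe_filter, mem_univ, true_and, Set.mem_ofPred_eq] at hz ⊢
    exact hz.2 ▸ hz.1
  · rintro ⟨x, v⟩ hz ⟨y, w⟩ hw rfl
    simp only [coe_filter, mem_univ, true_and, Set.mem_ofPred_eq] at hz hw
    exact Prod.ext (hz.2.trans hw.2.symm) rfl

theorem card_eq_mul_sq_le_card_ne_ne_add_four (ha : a ≠ 0) (f : F → F) (θ α : F) :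
    #{z : F × F | f z.1 = a * z.2 ^ 2} ≤
      #{z : F × F | f z.1 = a * z.2 ^ 2 ∧ z.1 ≠ θ ∧ z.1 ≠ α} + 4 := by
  have hcover : ({z | f z.1 = a * z.2 ^ 2} : Finset (F × F)) ⊆
      ({z | f z.1 = a * z.2 ^ 2 ∧ z.1 ≠ θ ∧ z.1 ≠ α} : Finset (F × F)) ∪
        (({z | f z.1 = a * z.2 ^ 2 ∧ z.1 = θ} : Finset (F × F)) ∪
          ({z | f z.1 = a * z.2 ^ 2 ∧ z.1 = α} : Finset (F × F))) := fun z hz ↦ by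
    simp only [mem_union, mem_filter_univ] at hz ⊢
    tauto
  grw [card_le_card hcover, card_union_le, card_union_le,
    card_eq_mul_sq_and_fst_eq_le_two ha f θ, card_eq_mul_sq_and_fst_eq_le_two ha f α]

end ExcludedPoints

section KummerPolynomial

variable {F : Type*} [Field F] {c : F} {n : ℕ}

theorem not_isSquare_C_mul_X_pow_sub_one (hc : c ≠ 0) (hn : (n : F) ≠ 0) :
    ¬ IsSquare (C c * (X ^ n - 1)) := by
  rintro ⟨r, hr⟩
  have hr_dvd : r * r ∣ X ^ n - 1 :=
    (isUnit_C.2 hc.isUnit).dvd_mul_left.1 hr.symm.dvd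
  have hr_unit : IsUnit r := (X_pow_sub_one_separable_iff.2 hn).squarefree r hr_dvd
  have hunit : IsUnit (X ^ n - 1 : F[X]) :=
    isUnit_of_mul_isUnit_right (hr ▸ hr_unit.mul hr_unit)
  have hdeg := natDegree_eq_zero_of_isUnit hunit
  rw [← C_1, natDegree_X_pow_sub_C] at hdeg
  exact hn (by rw [hdeg, Nat.cast_zero])

theorem natDegree_C_mul_X_pow_sub_one (hc : c ≠ 0) : (C c * (X ^ n - 1)).natDegree = n := by
  rw [natDegree_C_mul hc, ← C_1, natDegree_X_pow_sub_C]

theorem card_eval_C_mul_X_pow_sub_one_eq [Fintype F] [DecidableEq F] (hc : c ≠ 0) (hn : 0 < n)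
    {ζ : F} (hζ : IsPrimitiveRoot ζ n) {x₀ : F} (hx₀ : x₀ ≠ 0) :
    #{x | (C c * (X ^ n - 1)).eval x = (C c * (X ^ n - 1)).eval x₀} = n := by
  have h_roots : ({x | (C c * (X ^ n - 1)).eval x = (C c * (X ^ n - 1)).eval x₀} : Finset F) =
      (nthRoots n (x₀ ^ n)).toFinset := by
    ext x
    simp [mem_nthRoots hn, hc]
  rw [h_roots, Multiset.toFinset_card_of_nodup (hζ.nthRoots_nodup (pow_ne_zero n hx₀)),
    hζ.card_nthRoots, if_pos ⟨x₀, rfl⟩]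

end KummerPolynomial

section Moebius

variable {K F : Type*} [Field K] [Fintype K] [Field F]

theorem sub_pow_card [Algebra K F] (x y : F) :
    (x - y) ^ Fintype.card K = x ^ Fintype.card K - y ^ Fintype.card K :=
  map_sub (FiniteField.frobeniusAlgHom K F) x y

-- With `Q = #K`, the map `x ↦ x ^ Q` swaps `θ` and `θ ^ Q`, so the terms `x ^ (Q + 1)` and
-- `θ ^ (Q + 1)` cancel in `(x - θ ^ Q) ^ (Q + 1) - (θ - x) ^ (Q + 1)`.
theorem moebius_pow_sub_one [Algebra K F] {θ : F}
    (hθ : (θ ^ Fintype.card K) ^ Fintype.card K = θ) {x : F} (hx : x ≠ θ) :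
    ((x - θ ^ Fintype.card K) / (θ - x)) ^ (Fintype.card K + 1) - 1 =
      (θ - θ ^ Fintype.card K) * (x ^ Fintype.card K - x) / (θ - x) ^ (Fintype.card K + 1) := by
  have hx' : θ - x ≠ 0 := sub_ne_zero.2 hx.symm
  rw [div_pow, div_sub_one (pow_ne_zero _ hx')]
  congr 1
  rw [pow_succ, pow_succ, sub_pow_card, sub_pow_card, hθ]
  ring

theorem moebius_injective {α θ x y : F} (hαθ : α ≠ θ) (hx : x ≠ θ) (hy : y ≠ θ)
    (h : (x - α) / (θ - x) = (y - α) / (θ - y)) : x = y := by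
  rw [div_eq_div_iff (sub_ne_zero.2 hx.symm) (sub_ne_zero.2 hy.symm)] at h
  refine mul_left_cancel₀ (sub_ne_zero.2 hαθ) ?_
  linear_combination -h

variable [Fintype F] [DecidableEq F] [Algebra K F]

theorem card_artinSchreier_points_le_card_kummer_points {e : ℕ}
    (he : Fintype.card K + 1 = 2 * e) {a θ : F} (ha : a ≠ 0)
    (hθ : (θ ^ Fintype.card K) ^ Fintype.card K = θ) (hθ' : θ ^ Fintype.card K ≠ θ) :
    #{z : F × F | z.1 ^ Fintype.card K - z.1 = a * z.2 ^ 2 ∧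
        z.1 ≠ θ ∧ z.1 ≠ θ ^ Fintype.card K} ≤
      #{z : F × F | z.1 ≠ 0 ∧ (C ((θ - θ ^ Fintype.card K) * a)⁻¹ * (X ^ (2 * e) - 1)).eval z.1 =
        z.2 ^ 2} := by
  refine card_le_card_of_injOn
    (fun z ↦ ((z.1 - θ ^ Fintype.card K) / (θ - z.1), z.2 / (θ - z.1) ^ e)) ?_ ?_
  · rintro ⟨x, v⟩ hz
    simp only [coe_filter, mem_univ, true_and, Set.mem_ofPred_eq] at hz ⊢
    obtain ⟨hz, hxθ, hxα⟩ := hz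
    refine ⟨div_ne_zero (sub_ne_zero.2 hxα) (sub_ne_zero.2 hxθ.symm), ?_⟩
    have : θ - θ ^ Fintype.card K ≠ 0 := sub_ne_zero.2 hθ'.symm
    have : θ - x ≠ 0 := sub_ne_zero.2 hxθ.symm
    simp only [eval_mul, eval_C, eval_sub, eval_pow, eval_X, eval_one]
    rw [← he, moebius_pow_sub_one hθ hxθ, hz, he]
    field_simp
    ring
  · rintro ⟨x, v⟩ hz ⟨y, w⟩ hz' h
    simp only [coe_filter, mem_univ, true_and, Set.mem_ofPred_eq, Prod.mk.injEq] at hz hz' h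
    obtain rfl := moebius_injective hθ' hz.2.1 hz'.2.1 h.1
    exact Prod.ext rfl ((div_left_inj' (pow_ne_zero e (sub_ne_zero.2 hz.2.1.symm))).1 h.2)

theorem exists_le_card_kummer_points {e s : ℕ} (he : Fintype.card K + 1 = 2 * e)
    (hF : Fintype.card F = Fintype.card K ^ (2 * s)) :
    ∃ c : F, c ≠ 0 ∧ Fintype.card F + (Fintype.card K - 1) * Fintype.card K ^ s ≤
      #{z : F × F | z.1 ≠ 0 ∧ (C c * (X ^ (2 * e) - 1)).eval z.1 = z.2 ^ 2} + 4 := by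
  have hchar : ringChar F ≠ 2 := by
    have hodd : Odd (Fintype.card K) := ⟨e - 1, by lia⟩
    rw [Ne, FiniteField.even_card_iff_char_two, hF, Nat.odd_iff.1 hodd.pow]
    exact one_ne_zero
  obtain ⟨a, ha, hcard⟩ := exists_card_pow_card_sub_eq_mul_sq hchar hF
  obtain ⟨θ, hθ, hθ'⟩ := exists_pow_pow_eq_self_and_pow_ne_self Fintype.one_lt_card hF
  refine ⟨((θ - θ ^ Fintype.card K) * a)⁻¹,
    inv_ne_zero (mul_ne_zero (sub_ne_zero.2 hθ'.symm) ha), ?_⟩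
  rw [← hcard]
  grw [card_eq_mul_sq_le_card_ne_ne_add_four ha (fun x ↦ x ^ Fintype.card K - x) θ
    (θ ^ Fintype.card K), card_artinSchreier_points_le_card_kummer_points he ha hθ hθ']

end Moebius

theorem le_card_full_fibers {F : Type*} [Field F] [Fintype F] [DecidableEq F] {e m : ℕ} {c : F}
    (hc : c ≠ 0) (he : 0 < e) {ζ : F} (hζ : IsPrimitiveRoot ζ (2 * e))
    (hm : 2 * e * m ≤
      #{z : F × F | z.1 ≠ 0 ∧ (C c * (X ^ (2 * e) - 1)).eval z.1 = z.2 ^ 2}) :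
    m ≤ #{y : F | #{x | (C c * (X ^ (2 * e) - 1)).eval x = y ^ 2} = 2 * e} := by
  refine Nat.le_of_mul_le_mul_left (hm.trans (card_le_mul_card_image_of_maps_to (f := Prod.snd)
    (fun z hz ↦ ?_) _ fun y hy ↦ ?_)) (by lia : 0 < 2 * e)
  · simp only [mem_filter_univ] at hz ⊢
    rw [← hz.2]
    exact card_eval_C_mul_X_pow_sub_one_eq hc (by lia) hζ hz.1
  · refine le_of_le_of_eq ?_ ((mem_filter_univ y).1 hy)
    refine card_le_card_of_injOn Prod.fst ?_ ?_
    · rintro ⟨x, v⟩ hz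
      simp only [coe_filter, mem_filter_univ, mem_univ, true_and, Set.mem_ofPred_eq] at hz ⊢
      exact hz.2 ▸ hz.1.2
    · rintro ⟨x, v⟩ hz ⟨y, w⟩ hw rfl
      simp only [coe_filter, mem_filter_univ, Set.mem_ofPred_eq] at hz hw
      exact Prod.ext rfl (hz.2.trans hw.2.symm)

theorem six_mul_add_four_le_of_le_ceil {m s q : ℕ}
    (hm : (m : ℤ) ≤ 2 * ⌈((q : ℚ) + 4 * 5 ^ s - 25) / 12⌉ - 1) : 6 * m + 4 ≤ q + 4 * 5 ^ s := by
  have hceil := Int.ceil_lt_add_one (((q : ℚ) + 4 * 5 ^ s - 25) / 12)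
  have hm' : (m : ℚ) ≤ 2 * ⌈((q : ℚ) + 4 * 5 ^ s - 25) / 12⌉ - 1 := by exact_mod_cast hm
  have : (6 * m + 4 : ℚ) ≤ q + 4 * 5 ^ s := by linarith
  exact_mod_cast this

theorem stmt_7_general {K F : Type*} [Field K] [Fintype K] [Field F] [Fintype F] [DecidableEq F]
    [Algebra K F] {e s t m : ℕ} (he : Fintype.card K + 1 = 2 * e)
    (hF : Fintype.card F = Fintype.card K ^ (2 * s)) (ht : 1 ≤ t) (htm : t < m)
    (hm : 2 * e * m + 4 ≤ Fintype.card F + (Fintype.card K - 1) * Fintype.card K ^ s) :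
    ExistsOptimalLRC F (2 * e * m) ((e + 1) * t + 1) (2 * e * (m - t)) (e + 1) e := by
  obtain ⟨c, hc, hpoints⟩ := exists_le_card_kummer_points he hF
  obtain ⟨ζ, hζ⟩ := exists_isPrimitiveRoot_add_one hF
  rw [he] at hζ
  have he₀ : 0 < e := by lia
  have hm' := Nat.le_of_add_le_add_right (hm.trans hpoints)
  obtain ⟨S, hS, rfl⟩ := exists_subset_card_eq (le_card_full_fibers hc he₀ hζ hm')
  have hchar : ((2 * e : ℕ) : F) ≠ 0 := by
    have hK : (Fintype.card K : F) = 0 := by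
      rw [← map_natCast (algebraMap K F), FiniteField.cast_card_eq_zero, map_zero]
    simp [← he, hK]
  exact existsOptimalLRC_of_card_fibers (not_isSquare_C_mul_X_pow_sub_one hc hchar)
    (natDegree_C_mul_X_pow_sub_one hc) he₀ (fun y hy ↦ (mem_filter_univ y).1 (hS hy)) ht htm

/-- For odd `s` and `q = 5^(2s)`, for all
`1 ≤ t < m ≤ 2⌈(q + 4·5^s - 25)/12⌉ - 1`, there exists an optimal `(4, 3)`-LRC
with parameters `[6m, 4t + 1, 6(m-t)]_q`. -/
theorem stmt_7 (s : ℕ) (hs : 0 < s) (hsodd : Odd s) (q : ℕ) (hq : q = 5 ^ (2 * s))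
    (t m : ℕ) (ht : 1 ≤ t) (htm : t < m)
    (hm : (m : ℤ) ≤ 2 * ⌈((q : ℚ) + 4 * 5 ^ s - 25) / 12⌉ - 1)
    (F : Type*) [Field F] [Fintype F] [DecidableEq F] (hF : Fintype.card F = q) :
    ExistsOptimalLRC F (6 * m) (4 * t + 1) (6 * (m - t)) 4 3 := by
  have : Fact (Nat.Prime 5) := ⟨Nat.prime_five⟩
  have : CharP F 5 := charP_of_card_eq_prime_pow (f := 2 * s) (by rw [hF, hq])
  let _ : Algebra (ZMod 5) F := ZMod.algebra F 5
  refine stmt_7_general (K := ZMod 5) (e := 3) (s := s) ?_ ?_ ht htm ?_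
  · simp
  · rw [ZMod.card, hF, hq]
  · rw [ZMod.card, hF]
    exact six_mul_add_four_le_of_le_ceil hm
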